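/- Every proper closed subgroup H of PGL(2, ℂ) of positive dimension whose quotient PGL(2)/H contains an open Borel orbit (i.e., H is spherical) is, up to conjugation, one of: a maximal torus, the normalizer of a maximal torus, or a subgroup containing a maximal unipotent subgroup. -/

import Mathlib

/-!
STATEMENT 4: Every proper Zariski-closed subgroup H of PGL(2, ℂ) of positive dimension
which is spherical (the Borel subgroup B has a dense orbit in PGL(2)/H, equivalently
B·g·H is Zariski dense in PGL(2) for some g) is, up to conjugation, a maximal torus,
the normalizer of a maximal torus, or a subgroup containing a maximal unipotent subgroup.

Model: PGL(2, ℂ) := SL(2, ℂ)/center.  Zariski closedness and density of subsets of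
PGL(2) are expressed via their preimages in SL(2) and polynomials in the matrix entries.
"Positive dimension" of a Zariski-closed subgroup is expressed by it being infinite.
-/

abbrev SL2 := Matrix.SpecialLinearGroup (Fin 2) ℂ

abbrev PGL2 := SL2 ⧸ Subgroup.center SL2

/-- the projection SL(2, ℂ) → PGL(2, ℂ) -/
def pglPr : SL2 →* PGL2 := QuotientGroup.mk' (Subgroup.center SL2)

/-- evaluation of a polynomial in the matrix entries at a point of SL(2, ℂ) -/
noncomputable def evalSL2 (f : MvPolynomial (Fin 2 × Fin 2) ℂ) (A : SL2) : ℂ :=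
  MvPolynomial.eval (fun p => A.val p.1 p.2) f

/-- a subset of PGL(2, ℂ) is Zariski closed if its preimage in SL(2, ℂ) is the zero locus
of a set of polynomials in the matrix entries -/
def IsZariskiClosed (s : Set PGL2) : Prop :=
  ∃ P : Set (MvPolynomial (Fin 2 × Fin 2) ℂ),
    ∀ A : SL2, pglPr A ∈ s ↔ ∀ f ∈ P, evalSL2 f A = 0

/-- a subset of PGL(2, ℂ) is Zariski dense if every polynomial vanishing on its preimage
in SL(2, ℂ) vanishes on all of SL(2, ℂ) -/
def IsZariskiDense (s : Set PGL2) : Prop :=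
  ∀ f : MvPolynomial (Fin 2 × Fin 2) ℂ,
    (∀ A : SL2, pglPr A ∈ s → evalSL2 f A = 0) → ∀ A : SL2, evalSL2 f A = 0

/-- the Borel subgroup of PGL(2, ℂ): the image of the upper triangular matrices -/
def borelPGL2 : Set PGL2 := pglPr '' {A : SL2 | A.val 1 0 = 0}

/-- the standard maximal torus of PGL(2, ℂ): the image of the diagonal matrices -/
def torusPGL2 : Set PGL2 := pglPr '' {A : SL2 | A.val 1 0 = 0 ∧ A.val 0 1 = 0}

/-- the normalizer of the standard maximal torus in PGL(2, ℂ) -/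
def torusNormalizerPGL2 : Set PGL2 :=
  {x : PGL2 | ∀ t ∈ torusPGL2, x * t * x⁻¹ ∈ torusPGL2 ∧ x⁻¹ * t * x ∈ torusPGL2}

/-- the standard maximal unipotent subgroup of PGL(2, ℂ): the image of the upper
unitriangular matrices -/
def unipPGL2 : Set PGL2 := pglPr '' {A : SL2 | A.val 1 0 = 0 ∧ A.val 0 0 = 1}

/-- Weak Nullstellensatz over `ℂ` in countably many variables: a proper ideal has a zero. -/
theorem exists_zero_of_ne_top_of_countable {τ : Type} [Countable τ]
    (J : Ideal (MvPolynomial τ ℂ)) (hJ : J ≠ ⊤) :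
    ∃ x : τ → ℂ, ∀ f ∈ J, MvPolynomial.eval x f = 0 := by
  obtain ⟨m, hm, hJm⟩ := Ideal.exists_le_maximal J hJ
  let _ := Ideal.Quotient.field m
  have hrank : Module.rank ℂ (MvPolynomial τ ℂ ⧸ m) ≤ Cardinal.aleph0 := by
    refine (LinearMap.rank_le_of_surjective (Ideal.Quotient.mkₐ ℂ m).toLinearMap
      (Ideal.Quotient.mkₐ_surjective ℂ m)).trans ?_
    rw [MvPolynomial.rank_eq]
    simp
  have halg : Algebra.IsAlgebraic ℂ (MvPolynomial τ ℂ ⧸ m) := by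
    refine ⟨fun z => ?_⟩
    by_contra hz
    have h := (Transcendental.linearIndependent_sub_inv (F := ℂ) (x := z) hz).cardinal_le_rank
    have hc := h.trans hrank
    rw [Cardinal.mk_complex] at hc
    exact absurd hc (not_le.mpr Cardinal.aleph0_lt_continuum)
  have hbij := IsAlgClosed.algebraMap_bijective_of_isIntegral (k := ℂ)
    (K := MvPolynomial τ ℂ ⧸ m)
  choose x hx using fun i => hbij.2 (Ideal.Quotient.mkₐ ℂ m (MvPolynomial.X i))
  refine ⟨x, fun f hf => hbij.1 ?_⟩
  have hcomp : (Algebra.ofId ℂ (MvPolynomial τ ℂ ⧸ m)).comp (MvPolynomial.aeval x) =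
      Ideal.Quotient.mkₐ ℂ m := by
    ext i
    simpa [Algebra.ofId_apply] using hx i
  have := DFunLike.congr_fun hcomp f
  rw [map_zero]
  refine this.trans ?_
  exact Ideal.Quotient.eq_zero_iff_mem.mpr (hJm hf)

/-- A polynomial taking only countably many values on the zero locus of a prime ideal is
constant there. -/
theorem exists_sub_C_mem_of_countable_values {σ : Type} [Countable σ]
    (p : Ideal (MvPolynomial σ ℂ)) [p.IsPrime] (h : MvPolynomial σ ℂ) (S : Set ℂ)
    (hS : S.Countable)
    (hval : ∀ x : σ → ℂ, (∀ f ∈ p, MvPolynomial.eval x f = 0) → MvPolynomial.eval x h ∈ S) :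
    ∃ c, h - MvPolynomial.C c ∈ p := by
  by_contra! hne
  have := hS.to_subtype
  let ι : MvPolynomial σ ℂ →ₐ[ℂ] FractionRing (MvPolynomial σ ℂ ⧸ p) :=
    (IsScalarTower.toAlgHom ℂ (MvPolynomial σ ℂ ⧸ p) _).comp (Ideal.Quotient.mkₐ ℂ p)
  have hι : ∀ f, ι f = 0 ↔ f ∈ p := fun f => by
    simp [ι, Ideal.Quotient.eq_zero_iff_mem]
  let φ : MvPolynomial (σ ⊕ S) ℂ →ₐ[ℂ] FractionRing (MvPolynomial σ ℂ ⧸ p) :=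
    MvPolynomial.aeval (Sum.elim (fun i => ι (MvPolynomial.X i))
      (fun c => (ι (h - MvPolynomial.C c.1))⁻¹))
  have hφ : ∀ f, φ (MvPolynomial.rename Sum.inl f) = ι f := fun f => by
    have : (φ.comp (MvPolynomial.rename Sum.inl)) = ι := by
      ext i; simp [φ]
    exact DFunLike.congr_fun this f
  obtain ⟨x, hx⟩ := exists_zero_of_ne_top_of_countable (RingHom.ker φ) (RingHom.ker_ne_top φ)
  have hmem : MvPolynomial.eval (x ∘ Sum.inl) h ∈ S := by
    refine hval _ fun f hf => ?_
    rw [← MvPolynomial.eval_rename]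
    refine hx _ ?_
    rw [RingHom.mem_ker, hφ, hι]
    exact hf
  have hinv := hx (MvPolynomial.rename Sum.inl (h - MvPolynomial.C (MvPolynomial.eval (x ∘ Sum.inl) h)) *
    MvPolynomial.X (Sum.inr ⟨_, hmem⟩) - 1) (by
      rw [RingHom.mem_ker, map_sub, map_mul, hφ, map_one]
      simp only [φ, MvPolynomial.aeval_X, Sum.elim_inr]
      rw [mul_inv_cancel₀, sub_self]
      rw [Ne, hι]
      exact hne _)
  rw [map_sub, map_mul, MvPolynomial.eval_rename] at hinv
  simp at hinv

/-- A polynomial taking only countably many values on a complex affine algebraic set takes only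
finitely many values on it. -/
theorem finite_values_of_countable_values {σ : Type} [Finite σ]
    (P : Set (MvPolynomial σ ℂ)) (h : MvPolynomial σ ℂ) (S : Set ℂ) (hS : S.Countable)
    (hval : ∀ x : σ → ℂ, (∀ f ∈ P, MvPolynomial.eval x f = 0) → MvPolynomial.eval x h ∈ S) :
    {c | ∃ x : σ → ℂ, (∀ f ∈ P, MvPolynomial.eval x f = 0) ∧ MvPolynomial.eval x h = c}.Finite := by
  have hfin := (Ideal.span P).finite_minimalPrimes_of_isNoetherianRing
  have hconst : ∀ p : (Ideal.span P).minimalPrimes, ∃ c, h - MvPolynomial.C c ∈ p.1 := by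
    rintro ⟨p, hp⟩
    have := hp.1.1
    exact exists_sub_C_mem_of_countable_values p h S hS fun x hx =>
      hval x fun f hf => hx f (hp.1.2 (Ideal.subset_span hf))
  choose c hc using hconst
  have := hfin.to_subtype
  refine (Set.finite_range c).subset ?_
  rintro _ ⟨x, hx, rfl⟩
  have hle : Ideal.span P ≤ RingHom.ker (MvPolynomial.eval x) := Ideal.span_le.mpr hx
  have := RingHom.ker_isPrime (MvPolynomial.eval x)
  obtain ⟨p, hp, hpx⟩ := Ideal.exists_minimalPrimes_le hle
  refine ⟨⟨p, hp⟩, ?_⟩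
  have := hpx (hc ⟨p, hp⟩)
  rw [RingHom.mem_ker, map_sub, MvPolynomial.eval_C, sub_eq_zero] at this
  exact this.symm

/-- Clearing denominators in a polynomial evaluated at a tuple of rational functions. -/
theorem exists_pow_mul_eval_div_eq {σ : Type*} (q : σ → Polynomial ℂ) (d : Polynomial ℂ)
    (f : MvPolynomial σ ℂ) :
    ∃ (N : ℕ) (Q : Polynomial ℂ), ∀ s : ℂ, d.eval s ≠ 0 →
      d.eval s ^ N * MvPolynomial.eval (fun i => (q i).eval s / d.eval s) f = Q.eval s := by
  induction f using MvPolynomial.induction_on with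
  | C a => exact ⟨0, Polynomial.C a, fun s _ => by simp⟩
  | add f g hf hg =>
    obtain ⟨N, Q, hQ⟩ := hf
    obtain ⟨M, R, hR⟩ := hg
    refine ⟨N + M, d ^ M * Q + d ^ N * R, fun s hs => ?_⟩
    simp only [map_add, Polynomial.eval_add, Polynomial.eval_mul, Polynomial.eval_pow,
      ← hQ s hs, ← hR s hs]
    ring
  | mul_X f i hf =>
    obtain ⟨N, Q, hQ⟩ := hf
    refine ⟨N + 1, Q * q i, fun s hs => ?_⟩
    simp only [map_mul, MvPolynomial.eval_X, Polynomial.eval_mul, ← hQ s hs]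
    field_simp
    ring

/-- A polynomial vanishing at infinitely many points of a rational curve vanishes on it. -/
theorem eval_div_eq_zero_of_infinite {σ : Type*} (q : σ → Polynomial ℂ) (d : Polynomial ℂ)
    (f : MvPolynomial σ ℂ) (S : Set ℂ) (hS : S.Infinite) (hd : ∀ s ∈ S, d.eval s ≠ 0)
    (hf : ∀ s ∈ S, MvPolynomial.eval (fun i => (q i).eval s / d.eval s) f = 0)
    (s : ℂ) (hs : d.eval s ≠ 0) :
    MvPolynomial.eval (fun i => (q i).eval s / d.eval s) f = 0 := by
  obtain ⟨N, Q, hQ⟩ := exists_pow_mul_eval_div_eq q d f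
  have hQ0 : Q = 0 := Polynomial.eq_zero_of_infinite_isRoot Q <| hS.mono fun t ht => by
    rw [Set.mem_ofPred_eq, Polynomial.IsRoot, ← hQ t (hd t ht), hf t ht, mul_zero]
  have := hQ s hs
  rw [hQ0, Polynomial.eval_zero] at this
  exact (mul_eq_zero.mp this).resolve_left (pow_ne_zero N hs)

theorem SL2.exists_of_entries (a b c d : ℂ) (h : a * d - b * c = 1) :
    ∃ Q : SL2, Q.val 0 0 = a ∧ Q.val 0 1 = b ∧ Q.val 1 0 = c ∧ Q.val 1 1 = d :=
  ⟨⟨!![a, b; c, d], by rwa [Matrix.det_fin_two_of]⟩, rfl, rfl, rfl, rfl⟩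

theorem SL2.det_eq_one (A : SL2) : A.val 0 0 * A.val 1 1 - A.val 0 1 * A.val 1 0 = 1 := by
  rw [← Matrix.det_fin_two]
  exact A.2

theorem SL2.mul_entry (A B : SL2) (i j : Fin 2) :
    (A * B).val i j = A.val i 0 * B.val 0 j + A.val i 1 * B.val 1 j := by
  rw [Matrix.SpecialLinearGroup.coe_mul, Matrix.mul_apply, Fin.sum_univ_two]

theorem SL2.inv_entries (A : SL2) :
    A⁻¹.val 0 0 = A.val 1 1 ∧ A⁻¹.val 0 1 = -A.val 0 1 ∧
      A⁻¹.val 1 0 = -A.val 1 0 ∧ A⁻¹.val 1 1 = A.val 0 0 := by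
  rw [Matrix.SpecialLinearGroup.coe_inv, Matrix.adjugate_fin_two]
  exact ⟨rfl, rfl, rfl, rfl⟩

theorem SL2.trace_conj (Q A : SL2) : (Q * A * Q⁻¹).val.trace = A.val.trace := by
  rw [Matrix.SpecialLinearGroup.coe_mul, Matrix.trace_mul_comm,
    ← Matrix.SpecialLinearGroup.coe_mul, inv_mul_cancel_left]

theorem exists_conj_upperTriangular (g : SL2) : ∃ Q : SL2, (Q * g * Q⁻¹).val 1 0 = 0 := by
  by_cases hc : g.val 1 0 = 0
  · exact ⟨1, by simpa using hc⟩
  obtain ⟨l, hl⟩ := IsAlgClosed.exists_root (Polynomial.X ^ 2 -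
    Polynomial.C (g.val 0 0 + g.val 1 1) * Polynomial.X + 1 : Polynomial ℂ) (by
      have : (Polynomial.X ^ 2 - Polynomial.C (g.val 0 0 + g.val 1 1) * Polynomial.X + 1 :
        Polynomial ℂ).degree = 2 := by compute_degree!
      rw [this]; decide)
  have hl' : l ^ 2 - (g.val 0 0 + g.val 1 1) * l + 1 = 0 := by
    simpa [Polynomial.IsRoot] using hl
  obtain ⟨Q, h00, h01, h10, h11⟩ := SL2.exists_of_entries 0 (1 / g.val 1 0) (-g.val 1 0)
    (l - g.val 1 1) (by field_simp; ring)
  refine ⟨Q, ?_⟩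
  obtain ⟨i00, -, i10, -⟩ := SL2.inv_entries Q
  simp only [SL2.mul_entry, i00, i10, h10, h11]
  linear_combination g.val 1 0 * hl' + g.val 1 0 * SL2.det_eq_one g

theorem exists_conj_diagonal (g : SL2) (h10 : g.val 1 0 = 0) (hne : g.val 0 0 ≠ g.val 1 1) :
    ∃ Q : SL2, (Q * g * Q⁻¹).val 1 0 = 0 ∧ (Q * g * Q⁻¹).val 0 1 = 0 ∧
      (Q * g * Q⁻¹).val 0 0 = g.val 0 0 := by
  have hs : g.val 0 0 - g.val 1 1 ≠ 0 := sub_ne_zero.mpr hne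
  obtain ⟨Q, h00, h01, h10', h11⟩ := SL2.exists_of_entries 1
    (g.val 0 1 / (g.val 0 0 - g.val 1 1)) 0 1 (by ring)
  obtain ⟨i00, i01, i10, i11⟩ := SL2.inv_entries Q
  refine ⟨Q, ?_, ?_, ?_⟩ <;>
    simp only [SL2.mul_entry, i00, i01, i10, i11, h00, h01, h10', h11, h10]
  · ring
  · field_simp
    ring
  · ring

/-- A Zariski closed set containing infinitely many points of a conjugated rational curve
contains the whole curve. -/
theorem conj_curve_mem_of_infinite (K : Set SL2) (P : Set (MvPolynomial (Fin 2 × Fin 2) ℂ))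
    (hK : ∀ A, A ∈ K ↔ ∀ f ∈ P, evalSL2 f A = 0) (Q : SL2)
    (r : Fin 2 → Fin 2 → Polynomial ℂ) (d : Polynomial ℂ) (S : Set ℂ) (hS : S.Infinite)
    (hmem : ∀ s ∈ S, d.eval s ≠ 0 ∧ ∃ A : SL2, Q⁻¹ * A * Q ∈ K ∧
      ∀ i j, A.val i j = (r i j).eval s / d.eval s)
    (s : ℂ) (hs : d.eval s ≠ 0) (A : SL2)
    (hA : ∀ i j, A.val i j = (r i j).eval s / d.eval s) : Q⁻¹ * A * Q ∈ K := by
  let q : Fin 2 × Fin 2 → Polynomial ℂ := fun p =>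
    ∑ l, (∑ k, Polynomial.C (Q⁻¹.val p.1 k) * r k l) * Polynomial.C (Q.val l p.2)
  have hq : ∀ (t : ℂ) (B : SL2), (∀ i j, B.val i j = (r i j).eval t / d.eval t) →
      ∀ f, evalSL2 f (Q⁻¹ * B * Q) =
        MvPolynomial.eval (fun p => (q p).eval t / d.eval t) f := by
    intro t B hB f
    unfold evalSL2
    congr 2
    funext p
    simp only [Matrix.SpecialLinearGroup.coe_mul, Matrix.mul_apply, Fin.sum_univ_two, hB, q,
      Polynomial.eval_add, Polynomial.eval_mul, Polynomial.eval_C]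
    ring
  refine (hK _).mpr fun f hf => ?_
  rw [hq s A hA]
  refine eval_div_eq_zero_of_infinite q d f S hS (fun t ht => (hmem t ht).1) ?_ s hs
  intro t ht
  obtain ⟨_, B, hBK, hB⟩ := hmem t ht
  rw [← hq t B hB]
  exact (hK _).mp hBK f hf

theorem exists_conj_unipotent_le (K : Subgroup SL2) (P : Set (MvPolynomial (Fin 2 × Fin 2) ℂ))
    (hK : ∀ A, A ∈ K ↔ ∀ f ∈ P, evalSL2 f A = 0) (g : SL2) (hg : g ∈ K)
    (htr : g.val.trace = 2) (hg1 : g ≠ 1) :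
    ∃ Q : SL2, ∀ A : SL2, A.val 1 0 = 0 → A.val 0 0 = 1 → Q⁻¹ * A * Q ∈ K := by
  obtain ⟨Q, hQ⟩ := exists_conj_upperTriangular g
  refine ⟨Q, fun A h10 h00 => ?_⟩
  set u := Q * g * Q⁻¹ with hu
  have hgu : Q⁻¹ * u * Q = g := by rw [hu]; group
  have hutr : u.val 0 0 + u.val 1 1 = 2 := by
    rw [← Matrix.trace_fin_two, ← htr, hu, SL2.trace_conj]
  have hu00 : u.val 0 0 = 1 := by
    have : (u.val 0 0 - 1) ^ 2 = 0 := by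
      linear_combination u.val 0 0 * hutr - SL2.det_eq_one u - u.val 0 1 * hQ
    exact sub_eq_zero.mp (pow_eq_zero_iff two_ne_zero |>.mp this)
  have hu11 : u.val 1 1 = 1 := by linear_combination hutr - hu00
  have hu01 : u.val 0 1 ≠ 0 := by
    intro h01
    apply hg1
    have : u = 1 := by
      ext i j; fin_cases i <;> fin_cases j <;> simp [hQ, hu00, hu11, h01]
    rw [← hgu, this]; group
  have hpow (n : ℕ) : (u ^ n).val = !![1, n * u.val 0 1; 0, 1] := by
    induction n with
    | zero => simp [Matrix.one_fin_two]
    | succ n ih =>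
      rw [pow_succ, Matrix.SpecialLinearGroup.coe_mul, ih]
      ext i j; fin_cases i <;> fin_cases j <;>
        simp [Matrix.mul_apply, Fin.sum_univ_two, hQ, hu00, hu11]
      ring
  refine conj_curve_mem_of_infinite K P hK Q
    (fun i j => !![1, Polynomial.X; 0, 1] i j) 1
    (Set.range fun n : ℕ => (n : ℂ) * u.val 0 1)
    (Set.infinite_range_of_injective fun m n h => by simpa [hu01] using h) ?_
    (A.val 0 1) (by simp) A ?_
  · rintro _ ⟨n, rfl⟩
    refine ⟨by simp, u ^ n, ?_, ?_⟩
    · have : Q⁻¹ * u ^ n * Q = g ^ n := by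
        have h := conj_pow (i := n) (a := Q⁻¹) (b := u)
        rw [inv_inv, hgu] at h
        exact h.symm
      exact this ▸ K.pow_mem hg n
    · intro i j
      rw [hpow]; fin_cases i <;> fin_cases j <;> simp
  · have h11 : A.val 1 1 = 1 := by simpa [h10, h00] using SL2.det_eq_one A
    intro i j
    fin_cases i <;> fin_cases j <;> simp [h10, h00, h11]

theorem exists_conj_diagonal_le (K : Subgroup SL2) (P : Set (MvPolynomial (Fin 2 × Fin 2) ℂ))
    (hK : ∀ A, A ∈ K ↔ ∀ f ∈ P, evalSL2 f A = 0) (g : SL2) (hg : g ∈ K)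
    (hord : ∀ z : ℂ, (∃ n : ℕ, 0 < n ∧ z ^ n = 1) → g.val.trace ≠ z + z⁻¹) :
    ∃ Q : SL2, ∀ A : SL2, A.val 1 0 = 0 → A.val 0 1 = 0 → Q⁻¹ * A * Q ∈ K := by
  obtain ⟨R, hR⟩ := exists_conj_upperTriangular g
  set v := R * g * R⁻¹ with hv
  have hvtr : v.val 0 0 + v.val 1 1 = g.val.trace := by
    rw [← Matrix.trace_fin_two, hv, SL2.trace_conj]
  have hv1 : v.val 0 0 * v.val 1 1 = 1 := by simpa [hR] using SL2.det_eq_one v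
  have hv11 : v.val 1 1 = (v.val 0 0)⁻¹ := eq_inv_of_mul_eq_one_right hv1
  have hv0 : v.val 0 0 ≠ 0 := left_ne_zero_of_mul_eq_one hv1
  have hinf : ∀ n : ℕ, 0 < n → v.val 0 0 ^ n ≠ 1 := fun n hn h =>
    hord _ ⟨n, hn, h⟩ (by rw [← hvtr, hv11])
  obtain ⟨R', h10, h01, h00⟩ := exists_conj_diagonal v hR (fun h => hinf 2 two_pos (by
    rw [pow_two]; nth_rewrite 2 [h]; exact hv1))
  set u := R' * v * R'⁻¹ with hu
  have hgu : (R' * R)⁻¹ * u * (R' * R) = g := by rw [hu, hv]; group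
  have hdiag (B : SL2) (h10 : B.val 1 0 = 0) : B.val 0 0 ≠ 0 ∧ B.val 1 1 = (B.val 0 0)⁻¹ := by
    have h := SL2.det_eq_one B
    rw [h10, mul_zero, sub_zero] at h
    exact ⟨left_ne_zero_of_mul_eq_one h, eq_inv_of_mul_eq_one_right h⟩
  have hpow (n : ℕ) : (u ^ n).val = !![v.val 0 0 ^ n, 0; 0, (v.val 0 0 ^ n)⁻¹] := by
    induction n with
    | zero => simp [Matrix.one_fin_two]
    | succ n ih =>
      rw [pow_succ, Matrix.SpecialLinearGroup.coe_mul, ih]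
      have h11 := (hdiag u h10).2
      ext i j; fin_cases i <;> fin_cases j <;>
        simp [Matrix.mul_apply, Fin.sum_univ_two, h10, h01, h00, h11, pow_succ, mul_comm]
  refine ⟨R' * R, fun A hA10 hA01 => ?_⟩
  refine conj_curve_mem_of_infinite K P hK (R' * R)
    (fun i j => !![Polynomial.X ^ 2, 0; 0, 1] i j) Polynomial.X
    (Set.range fun n : ℕ => v.val 0 0 ^ n)
    (Set.infinite_range_of_injective ?_) ?_
    (A.val 0 0) (by simpa using (hdiag A hA10).1) A ?_
  · refine fun m n h => ?_
    by_contra hmn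
    wlog hlt : m < n generalizing m n
    · exact this n m h.symm (Ne.symm hmn) (by omega)
    refine hinf (n - m) (by omega) (mul_left_cancel₀ (pow_ne_zero m hv0) ?_)
    rw [← pow_add, mul_one, Nat.add_sub_cancel' hlt.le]
    exact h.symm
  · rintro _ ⟨n, rfl⟩
    refine ⟨by simp [hv0], u ^ n, ?_, ?_⟩
    · have : (R' * R)⁻¹ * u ^ n * (R' * R) = g ^ n := by
        have h := conj_pow (i := n) (a := (R' * R)⁻¹) (b := u)
        rw [inv_inv, hgu] at h
        exact h.symm
      exact this ▸ K.pow_mem hg n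
    · intro i j
      have := pow_ne_zero n hv0
      rw [hpow]; fin_cases i <;> fin_cases j <;> simp
      field_simp
  · have := (hdiag A hA10).1
    intro i j
    fin_cases i <;> fin_cases j <;> simp [hA10, hA01, (hdiag A hA10).2]
    field_simp

theorem exists_trace_eq_two_of_finite_traces (K : Subgroup SL2) (hinf : (K : Set SL2).Infinite)
    (hfin : ((fun A : SL2 => A.val.trace) '' (K : Set SL2)).Finite) :
    ∃ g ∈ K, g.val.trace = 2 ∧ g ≠ 1 := by
  obtain ⟨b, hbK, hbspan, hbli⟩ := exists_linearIndependent ℂ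
    ((fun A : SL2 => A.val) '' (K : Set SL2))
  have hbfin : b.Finite := hbli.setFinite
  have := hbfin.to_subtype
  let τ : SL2 → b → ℂ := fun x m => (x.val * m.1).trace
  have hmaps : Set.MapsTo τ (K : Set SL2)
      (Set.univ.pi fun _ => (fun A : SL2 => A.val.trace) '' (K : Set SL2)) := by
    rintro x hx ⟨m, hm⟩ -
    obtain ⟨y, hy, rfl⟩ := hbK hm
    exact ⟨x * y, K.mul_mem hx hy, rfl⟩
  obtain ⟨x, hx, y, hy, hne, hxy⟩ :=
    hinf.exists_ne_map_eq_of_mapsTo hmaps (Set.Finite.pi fun _ => hfin)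
  refine ⟨x * y⁻¹, K.mul_mem hx (K.inv_mem hy), ?_, fun h => hne (mul_inv_eq_one.mp h)⟩
  have hspan : ∀ m ∈ Submodule.span ℂ b, (x.val * m).trace = (y.val * m).trace := by
    intro m hm
    induction hm using Submodule.span_induction with
    | mem m hm => exact congrFun hxy ⟨m, hm⟩
    | zero => simp
    | add m n _ _ hm hn => simp only [mul_add, Matrix.trace_add, hm, hn]
    | smul c m _ hm => simp only [mul_smul_comm, Matrix.trace_smul, hm]
  have h := hspan y⁻¹.val (hbspan ▸ Submodule.subset_span ⟨y⁻¹, K.inv_mem hy, rfl⟩)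
  rw [← Matrix.SpecialLinearGroup.coe_mul, ← Matrix.SpecialLinearGroup.coe_mul,
    mul_inv_cancel] at h
  rw [h]
  simp

theorem countable_traces_of_roots_of_unity :
    {t : ℂ | ∃ z : ℂ, (∃ n : ℕ, 0 < n ∧ z ^ n = 1) ∧ t = z + z⁻¹}.Countable := by
  have hroots : {z : ℂ | ∃ n : ℕ, 0 < n ∧ z ^ n = 1}.Countable := by
    have : {z : ℂ | ∃ n : ℕ, 0 < n ∧ z ^ n = 1} ⊆
        ⋃ n : ℕ, ((Polynomial.nthRoots n (1 : ℂ)).toFinset : Set ℂ) := by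
      rintro z ⟨n, hn, hz⟩
      exact Set.mem_iUnion.mpr ⟨n, by simpa [Polynomial.mem_nthRoots hn] using hz⟩
    exact (Set.countable_iUnion fun n => Finset.countable_toSet _).mono this
  refine (hroots.image fun z => z + z⁻¹).mono ?_
  rintro _ ⟨z, hz, rfl⟩
  exact ⟨z, hz, rfl⟩

theorem finite_traces_of_countable (K : Set SL2) (P : Set (MvPolynomial (Fin 2 × Fin 2) ℂ))
    (hK : ∀ A, A ∈ K ↔ ∀ f ∈ P, evalSL2 f A = 0) (S : Set ℂ) (hS : S.Countable)
    (htr : ∀ A ∈ K, A.val.trace ∈ S) :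
    ((fun A : SL2 => A.val.trace) '' K).Finite := by
  let D : MvPolynomial (Fin 2 × Fin 2) ℂ := MvPolynomial.X (0, 0) * MvPolynomial.X (1, 1) -
    MvPolynomial.X (0, 1) * MvPolynomial.X (1, 0) - 1
  let T : MvPolynomial (Fin 2 × Fin 2) ℂ := MvPolynomial.X (0, 0) + MvPolynomial.X (1, 1)
  refine (finite_values_of_countable_values (insert D P) T S hS ?_).subset ?_
  · intro x hx
    have hdet : (Matrix.of fun i j => x (i, j)).det = 1 := by
      have := hx D (Set.mem_insert _ _)
      simp only [D, map_sub, map_mul, MvPolynomial.eval_X, map_one] at this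
      rw [Matrix.det_fin_two]
      exact sub_eq_zero.mp this
    have hmem := htr ⟨_, hdet⟩ ((hK _).mpr fun f hf => hx f (Set.mem_insert_of_mem _ hf))
    simpa [T, Matrix.trace_fin_two] using hmem
  · rintro _ ⟨A, hA, rfl⟩
    refine ⟨fun p => A.val p.1 p.2, ?_, by simp [T, Matrix.trace_fin_two]⟩
    rintro f (rfl | hf)
    · have := A.2
      rw [Matrix.det_fin_two] at this
      simp [D, this]
    · exact (hK A).mp hA f hf

/-- A subgroup containing the diagonal torus and no nontrivial unipotent element is the torus or
the group of monomial matrices. -/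
theorem eq_diagonal_or_monomial (K : Subgroup SL2)
    (hT : ∀ A : SL2, A.val 1 0 = 0 → A.val 0 1 = 0 → A ∈ K)
    (hu : ∀ A ∈ K, A.val.trace = 2 → A = 1) :
    (∀ A : SL2, A ∈ K ↔ A.val 1 0 = 0 ∧ A.val 0 1 = 0) ∨
    (∀ A : SL2, A ∈ K ↔ (A.val 1 0 = 0 ∧ A.val 0 1 = 0) ∨ (A.val 0 0 = 0 ∧ A.val 1 1 = 0)) := by
  have hmono : ∀ A ∈ K, (A.val 1 0 = 0 ∧ A.val 0 1 = 0) ∨ (A.val 0 0 = 0 ∧ A.val 1 1 = 0) := by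
    intro A hA
    by_contra! hcon
    obtain ⟨hoff, hdiag⟩ := hcon
    obtain ⟨s, hs0, hs⟩ : ∃ s : ℂ, s ≠ 0 ∧ s * A.val 0 0 + s⁻¹ * A.val 1 1 = 2 := by
      by_cases h0 : A.val 0 0 = 0
      · have h1 := hdiag h0
        exact ⟨A.val 1 1 / 2, by simpa using h1, by rw [h0]; field_simp; ring⟩
      · by_cases h1 : A.val 1 1 = 0
        · exact ⟨2 / A.val 0 0, by simpa using h0, by rw [h1]; field_simp; ring⟩
        · obtain ⟨w, hw⟩ := IsAlgClosed.exists_pow_nat_eq (1 - A.val 0 0 * A.val 1 1) two_pos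
          have hw1 : 1 + w ≠ 0 := by
            intro h
            have : A.val 0 0 * A.val 1 1 = 0 := by
              linear_combination (1 - w) * h + hw
            exact (mul_ne_zero h0 h1) this
          refine ⟨(1 + w) / A.val 0 0, div_ne_zero hw1 h0, ?_⟩
          field_simp
          linear_combination hw
    obtain ⟨D, h00, h01, h10, h11⟩ := SL2.exists_of_entries s 0 0 s⁻¹ (by field_simp; ring)
    have hD : D ∈ K := hT D h10 h01
    have h1 := hu (D * A) (K.mul_mem hD hA) (by
      rw [Matrix.trace_fin_two, SL2.mul_entry, SL2.mul_entry, h00, h01, h10, h11]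
      linear_combination hs)
    have hA10 : (D * A).val 1 0 = 0 := by rw [h1]; simp
    have hA01 : (D * A).val 0 1 = 0 := by rw [h1]; simp
    rw [SL2.mul_entry, h10, h11, zero_mul, zero_add] at hA10
    rw [SL2.mul_entry, h00, h01, zero_mul, add_zero] at hA01
    exact hoff ((mul_eq_zero.mp hA10).resolve_left (inv_ne_zero hs0))
      ((mul_eq_zero.mp hA01).resolve_left hs0)
  by_cases hall : ∀ A ∈ K, A.val 1 0 = 0 ∧ A.val 0 1 = 0
  · exact Or.inl fun A => ⟨hall A, fun h => hT A h.1 h.2⟩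
  · right
    push Not at hall
    obtain ⟨W, hW, hW'⟩ := hall
    have hWa : W.val 0 0 = 0 ∧ W.val 1 1 = 0 :=
      (hmono W hW).resolve_left fun h => hW' h.1 h.2
    refine fun A => ⟨hmono A, ?_⟩
    rintro (h | h)
    · exact hT A h.1 h.2
    · obtain ⟨i00, -, -, i11⟩ := SL2.inv_entries W
      have : A * W⁻¹ ∈ K := hT _
        (by rw [SL2.mul_entry, i00, hWa.2, h.2]; ring)
        (by rw [SL2.mul_entry, i11, hWa.1, h.1]; ring)
      simpa using K.mul_mem this hW

/-- Infinite Zariski closed subgroups of `SL(2, ℂ)`, up to conjugation. -/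
theorem infinite_closed_subgroup_SL2 (K : Subgroup SL2)
    (P : Set (MvPolynomial (Fin 2 × Fin 2) ℂ))
    (hK : ∀ A, A ∈ K ↔ ∀ f ∈ P, evalSL2 f A = 0) (hinf : (K : Set SL2).Infinite) :
    ∃ Q : SL2,
      (∀ A : SL2, Q⁻¹ * A * Q ∈ K ↔ A.val 1 0 = 0 ∧ A.val 0 1 = 0) ∨
      (∀ A : SL2, Q⁻¹ * A * Q ∈ K ↔
        (A.val 1 0 = 0 ∧ A.val 0 1 = 0) ∨ (A.val 0 0 = 0 ∧ A.val 1 1 = 0)) ∨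
      (∀ A : SL2, A.val 1 0 = 0 → A.val 0 0 = 1 → Q⁻¹ * A * Q ∈ K) := by
  by_cases hu : ∃ g ∈ K, g.val.trace = 2 ∧ g ≠ 1
  · obtain ⟨g, hg, htr, hg1⟩ := hu
    obtain ⟨Q, hQ⟩ := exists_conj_unipotent_le K P hK g hg htr hg1
    exact ⟨Q, Or.inr (Or.inr hQ)⟩
  · obtain ⟨g, hg, hord⟩ : ∃ g ∈ K,
        ∀ z : ℂ, (∃ n : ℕ, 0 < n ∧ z ^ n = 1) → g.val.trace ≠ z + z⁻¹ := by
      by_contra! hcon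
      exact hu (exists_trace_eq_two_of_finite_traces K hinf
        (finite_traces_of_countable K P hK _ countable_traces_of_roots_of_unity hcon))
    obtain ⟨Q, hQ⟩ := exists_conj_diagonal_le K P hK g hg hord
    have hmem (A : SL2) : A ∈ K.comap (MulAut.conj Q⁻¹).toMonoidHom ↔ Q⁻¹ * A * Q ∈ K := by
      simp
    have htriv : ∀ A ∈ K.comap (MulAut.conj Q⁻¹).toMonoidHom, A.val.trace = 2 → A = 1 := by
      intro A hA htr
      by_contra hne
      refine hu ⟨_, (hmem A).mp hA, ?_, ?_⟩
      · simpa [htr] using SL2.trace_conj Q⁻¹ A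
      · intro h
        refine hne ?_
        have h' : A = Q * (Q⁻¹ * A * Q) * Q⁻¹ := by group
        rw [h', h]; group
    refine ⟨Q, ?_⟩
    simp only [← hmem]
    rcases eq_diagonal_or_monomial _ (fun A h h' => (hmem A).mpr (hQ A h h')) htriv with h | h
    · exact Or.inl h
    · exact Or.inr (Or.inl h)

theorem pglPr_surjective : Function.Surjective pglPr :=
  QuotientGroup.mk'_surjective _

theorem pglPr_mem_torusPGL2_iff (A : SL2) :
    pglPr A ∈ torusPGL2 ↔ A.val 1 0 = 0 ∧ A.val 0 1 = 0 := by
  refine ⟨?_, fun h => ⟨A, h, rfl⟩⟩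
  rintro ⟨B, hB, hBA⟩
  obtain ⟨z, hz, rfl⟩ := (QuotientGroup.mk'_eq_mk' _).mp hBA
  obtain ⟨r, -, hr⟩ := Matrix.SpecialLinearGroup.mem_center_iff.mp hz
  have hB' : B.val 1 0 = 0 ∧ B.val 0 1 = 0 := hB
  simp [← hr, hB'.1, hB'.2]

theorem pglPr_mem_torusNormalizerPGL2_iff (A : SL2) :
    pglPr A ∈ torusNormalizerPGL2 ↔
      (A.val 1 0 = 0 ∧ A.val 0 1 = 0) ∨ (A.val 0 0 = 0 ∧ A.val 1 1 = 0) := by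
  have hdet := SL2.det_eq_one A
  constructor
  · intro h
    obtain ⟨D, h00, h01, h10, h11⟩ := SL2.exists_of_entries 2 0 0 2⁻¹ (by norm_num)
    have hD := (h (pglPr D) ((pglPr_mem_torusPGL2_iff D).mpr ⟨h10, h01⟩)).1
    rw [← map_inv, ← map_mul, ← map_mul, pglPr_mem_torusPGL2_iff] at hD
    obtain ⟨i00, i01, i10, i11⟩ := SL2.inv_entries A
    simp only [SL2.mul_entry, i00, i01, i10, i11, h00, h01, h10, h11] at hD
    obtain ⟨h1, h2⟩ := hD
    have hcd : A.val 1 0 * A.val 1 1 = 0 := by linear_combination (2 / 3) * h1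
    have hab : A.val 0 0 * A.val 0 1 = 0 := by linear_combination (-2 / 3) * h2
    rcases mul_eq_zero.mp hcd with hc | hd
    · rcases mul_eq_zero.mp hab with ha | hb
      · simp [hc, ha] at hdet
      · exact Or.inl ⟨hc, hb⟩
    · rcases mul_eq_zero.mp hab with ha | hb
      · exact Or.inr ⟨ha, hd⟩
      · simp [hd, hb] at hdet
  · rintro h t ⟨D, ⟨hD1, hD2⟩, rfl⟩
    rw [← map_inv, ← map_mul, ← map_mul, ← map_mul, ← map_mul, pglPr_mem_torusPGL2_iff,
      pglPr_mem_torusPGL2_iff]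
    obtain ⟨i00, i01, i10, i11⟩ := SL2.inv_entries A
    simp only [SL2.mul_entry, i00, i01, i10, i11]
    rcases h with h | h <;> simp [h, hD1, hD2]

theorem spherical_subgroups_of_pgl2 (H : Subgroup PGL2)
    (hclosed : IsZariskiClosed (H : Set PGL2))
    (hposdim : (H : Set PGL2).Infinite)      -- positive dimension
    (hproper : H ≠ ⊤)
    -- H is spherical: some translate B·g·H is Zariski dense
    (hspherical : ∃ g : PGL2,
      IsZariskiDense {x : PGL2 | ∃ b ∈ borelPGL2, ∃ h ∈ H, x = b * g * h}) :
    ∃ g : PGL2,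
      ((fun h => g * h * g⁻¹) '' (H : Set PGL2) = torusPGL2) ∨
      ((fun h => g * h * g⁻¹) '' (H : Set PGL2) = torusNormalizerPGL2) ∨
      (unipPGL2 ⊆ (fun h => g * h * g⁻¹) '' (H : Set PGL2)) := by
  obtain ⟨P, hP⟩ := hclosed
  have hinf : ((H.comap pglPr : Subgroup SL2) : Set SL2).Infinite := fun hfin =>
    hposdim ((hfin.image pglPr).subset fun x hx => by
      obtain ⟨A, rfl⟩ := pglPr_surjective x
      exact ⟨A, hx, rfl⟩)
  obtain ⟨Q, hQ⟩ := infinite_closed_subgroup_SL2 (H.comap pglPr) P hP hinf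
  have himage (A : SL2) : pglPr A ∈ (fun h => pglPr Q * h * (pglPr Q)⁻¹) '' (H : Set PGL2) ↔
      Q⁻¹ * A * Q ∈ H.comap pglPr := by
    rw [Subgroup.mem_comap, map_mul, map_mul, map_inv]
    constructor
    · rintro ⟨h, hh, hA⟩
      rw [← hA]
      simpa [mul_assoc] using hh
    · intro h
      exact ⟨_, h, by simp [mul_assoc]⟩
  refine ⟨pglPr Q, ?_⟩
  rcases hQ with h | h | h
  · refine Or.inl (Set.ext fun x => ?_)
    obtain ⟨A, rfl⟩ := pglPr_surjective x
    rw [himage, h, pglPr_mem_torusPGL2_iff]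
  · refine Or.inr (Or.inl (Set.ext fun x => ?_))
    obtain ⟨A, rfl⟩ := pglPr_surjective x
    rw [himage, h, pglPr_mem_torusNormalizerPGL2_iff]
  · refine Or.inr (Or.inr ?_)
    rintro _ ⟨A, hA, rfl⟩
    exact (himage A).mpr (h A hA.1 hA.2)
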